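/- arXiv:2203.05487 — 3 statements merged into one kernel-verified Lean document; each statement's English description precedes it below -/
import Mathlib

section
/- There exists a finite constructible graph G such that for every construction order of G and every domination map δ associated to that order, δ is not a graph homomorphism; that is, there exist two adjacent non-root vertices u and v of G such that δ(u) and δ(v) are neither adjacent nor equal. (A witness is the graph obtained from two disjoint copies K_1, K_2 of the graph K by identifying the vertex x of K_1 with the vertex y of K_2.) -/
universe u

/-- `y` dominates `x` in `G`: `y ≠ x` and the closed neighbourhood of `x` is contained
in the closed neighbourhood of `y`. -/
def Dominates {V : Type u} (G : SimpleGraph V) (y x : V) : Prop :=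
  y ≠ x ∧ ∀ z : V, (z = x ∨ G.Adj x z) → (z = y ∨ G.Adj y z)

/-- `y` dominates `x` in the subgraph of `G` induced by `S`. -/
def DominatesOn {V : Type u} (G : SimpleGraph V) (S : Set V) (y x : V) : Prop :=
  y ≠ x ∧ ∀ z ∈ S, (z = x ∨ G.Adj x z) → (z = y ∨ G.Adj y z)

/-- `r` (a well-order on `V`) is a construction order for `G`: every non-root vertex `x`
(i.e. one with a strictly earlier vertex) is dominated, in the subgraph induced by the
vertices up to and including `x`, by some strictly earlier vertex. -/
def ConstructionOrderSpec {V : Type u} (G : SimpleGraph V) (r : V → V → Prop) : Prop :=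
  ∀ x : V, (∃ y, r y x) → ∃ y, r y x ∧ DominatesOn G {z | r z x ∨ z = x} y x

/-- A graph is constructible if it has a construction order. -/
def Constructible {V : Type u} (G : SimpleGraph V) : Prop :=
  ∃ r : V → V → Prop, IsWellOrder V r ∧ ConstructionOrderSpec G r

/-- `δ` is a domination map for the construction order `r` on `G`: it assigns to each non-root
vertex `x` a strictly earlier vertex dominating `x` in the subgraph induced by the vertices up
to and including `x`. -/
def IsDominationMap {V : Type u} (G : SimpleGraph V) (r : V → V → Prop) (δ : V → V) : Prop :=
  ∀ x : V, (∃ y, r y x) → r (δ x) x ∧ DominatesOn G {z | r z x ∨ z = x} (δ x) x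

/-!
Glue two copies `K₁`, `K₂` of `K` along `c = x₁ = y₂`. The last vertex of a finite graph in a
construction order is dominated in the whole graph, and `x` is the only dominated vertex of `K`;
hence `c` comes last in `K₁`, and its parent lies in `K₁ \ {c}`. In `K` without `x` only `t` and
`t'` are dominated, by `z` and `z'` respectively; hence the last vertex of `K₂ \ {x₂}` is a
neighbour of `c` whose parent lies in `K₂ \ {c}`. These two parents are on different sides of the
cut vertex `c`, so they are neither adjacent nor equal.
-/

open Set

section LastVertex

variable {V : Type*} {r : V → V → Prop} {S : Set V} {v : V}

/-- `v` is the last element of `S` in the strict total order `r`. -/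
def IsLastIn (r : V → V → Prop) (S : Set V) (v : V) : Prop :=
  v ∈ S ∧ ∀ u ∈ S, u ≠ v → r u v

theorem exists_isLastIn [IsStrictTotalOrder V r] (hfin : S.Finite) (hne : S.Nonempty) :
    ∃ v, IsLastIn r S v := by
  classical
  let := linearOrderOfSTO r
  obtain ⟨v, hv, hmax⟩ := exists_max_image S id hfin hne
  exact ⟨v, hv, fun u hu huv => lt_of_le_of_ne (hmax u hu) huv⟩

theorem IsLastIn.exists_rel (hv : IsLastIn r S v) (hS : S.Nontrivial) : ∃ u, r u v :=
  let ⟨u, hu, huv⟩ := hS.exists_ne v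
  ⟨u, hv.2 u hu huv⟩

theorem IsLastIn.of_sdiff_singleton {d : V} (hv : IsLastIn r (S \ {d}) v) (hd : r d v) :
    IsLastIn r S v :=
  ⟨hv.1.1, fun u hu huv => by
    by_cases hud : u = d
    · exact hud ▸ hd
    · exact hv.2 u ⟨hu, hud⟩ huv⟩

end LastVertex

section Domination

variable {V : Type*} {G : SimpleGraph V} {r : V → V → Prop} {δ : V → V} {S : Set V} {v p : V}

theorem DominatesOn.mono {T : Set V} (h : DominatesOn G T p v) (hST : S ⊆ T) :
    DominatesOn G S p v :=
  ⟨h.1, fun z hz => h.2 z (hST hz)⟩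

theorem DominatesOn.adj (h : DominatesOn G S p v) (hv : v ∈ S) : G.Adj p v :=
  (h.2 v hv (.inl rfl)).resolve_left h.1.symm

theorem dominatesOn_univ : DominatesOn G univ p v ↔ Dominates G p v := by
  simp only [DominatesOn, Dominates, mem_univ, true_imp_iff]

theorem dominatesOn_image_iff {W : Type*} {H : SimpleGraph W} (f : G ↪g H) :
    DominatesOn H (f '' S) (f p) (f v) ↔ DominatesOn G S p v := by
  simp only [DominatesOn, forall_mem_image, f.injective.eq_iff, f.injective.ne_iff, f.map_adj_iff]

theorem dominatesOn_range_iff {W : Type*} {H : SimpleGraph W} (f : G ↪g H) :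
    DominatesOn H (range f) (f p) (f v) ↔ Dominates G p v := by
  rw [← image_univ, dominatesOn_image_iff, dominatesOn_univ]

theorem IsDominationMap.dominatesOn (hδ : IsDominationMap G r δ) (hv : IsLastIn r S v)
    (hS : S.Nontrivial) : DominatesOn G S (δ v) v :=
  (hδ v (hv.exists_rel hS)).2.mono fun u hu =>
    (eq_or_ne u v).elim .inr fun huv => .inl (hv.2 u hu huv)

end Domination

section CutVertex

variable {V : Type*} {G : SimpleGraph V} {A B : Set V} {c u v : V}

/-- The vertex `c` separates `A` from `B` in `G`: the two sets share only `c`, and every edge of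
`G` lies within one of them. -/
structure IsCutVertex (G : SimpleGraph V) (A B : Set V) (c : V) : Prop where
  inter_eq : A ∩ B = {c}
  adj_within : ∀ ⦃u v⦄, G.Adj u v → u ∈ A ∧ v ∈ A ∨ u ∈ B ∧ v ∈ B

namespace IsCutVertex

theorem symm (h : IsCutVertex G A B c) : IsCutVertex G B A c :=
  ⟨inter_comm A B ▸ h.inter_eq, fun _ _ huv => (h.adj_within huv).symm⟩

theorem mem_left (h : IsCutVertex G A B c) : c ∈ A :=
  (h.inter_eq.ge rfl).1

theorem notMem_right (h : IsCutVertex G A B c) (hv : v ∈ A) (hvc : v ≠ c) : v ∉ B :=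
  fun hvB => hvc (h.inter_eq.le ⟨hv, hvB⟩)

theorem mem_left_of_adj (h : IsCutVertex G A B c) (hv : v ∈ A) (hvc : v ≠ c)
    (huv : G.Adj u v) : u ∈ A :=
  (h.adj_within huv).elim And.left fun hB => absurd hB.2 (h.notMem_right hv hvc)

theorem not_adj (h : IsCutVertex G A B c) (hu : u ∈ A) (huc : u ≠ c) (hv : v ∈ B) (hvc : v ≠ c) :
    ¬ G.Adj u v :=
  fun huv => h.symm.notMem_right hv hvc (h.mem_left_of_adj hu huc huv.symm)

variable {r : V → V → Prop} {δ : V → V}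

theorem isLastIn_left [IsStrictTotalOrder V r] (h : IsCutVertex G A B c)
    (hδ : IsDominationMap G r δ) (hfin : A.Finite) (hnt : A.Nontrivial)
    (hA : ∀ p ∈ A, ∀ v ∈ A, DominatesOn G A p v → v = c) : IsLastIn r A c := by
  obtain ⟨v, hv⟩ := exists_isLastIn (r := r) hfin hnt.nonempty
  have hdom : DominatesOn G A (δ v) v := hδ.dominatesOn hv hnt
  suffices hvc : v = c from hvc ▸ hv
  by_contra hvc
  exact hvc (hA _ (h.mem_left_of_adj hv.1 hvc (hdom.adj hv.1)) v hv.1 hdom)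

theorem parent_mem_left (h : IsCutVertex G A B c) (hδ : IsDominationMap G r δ)
    (hc : IsLastIn r A c) {a : V} (ha : a ∈ A) (hca : G.Adj c a) : δ c ∈ A := by
  have hdom : DominatesOn G A (δ c) c := hδ.dominatesOn hc ⟨a, ha, c, hc.1, hca.ne'⟩
  obtain rfl | hadj := hdom.2 a ha (.inr hca)
  · exact ha
  · exact h.mem_left_of_adj ha hca.ne' hadj

theorem exists_isLastIn_right_sdiff_singleton [IsStrictTotalOrder V r] (h : IsCutVertex G A B c)
    (hδ : IsDominationMap G r δ) (hfin : B.Finite) {b d : V}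
    (hpA : δ c ∈ A) (hpc : δ c ≠ c) (hcd : c ≠ d) (hb : b ∈ B \ {d}) (hcb : G.Adj c b)
    (hB : ∀ p ∈ B, ∀ v ∈ B, DominatesOn G B p v → v = d) :
    ∃ v, IsLastIn r (B \ {d}) v ∧ δ v ∈ B \ {d} ∧ DominatesOn G (B \ {d}) (δ v) v := by
  have hcB : c ∈ B \ {d} := ⟨h.symm.mem_left, hcd⟩
  have hnt : (B \ {d}).Nontrivial := ⟨c, hcB, b, hb, hcb.ne⟩
  obtain ⟨v, hv⟩ := exists_isLastIn (r := r) (hfin.sdiff (t := {d})) hnt.nonempty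
  have hdom : DominatesOn G (B \ {d}) (δ v) v := hδ.dominatesOn hv hnt
  have hvc : v ≠ c := by
    rintro rfl
    obtain rfl | hadj := hdom.2 b hb (.inr hcb)
    · exact h.notMem_right hpA hpc hb.1
    · exact h.not_adj hpA hpc hb.1 hcb.ne' hadj
  have hpB : δ v ∈ B := h.symm.mem_left_of_adj hv.1.1 hvc (hdom.adj hv.1)
  have hpd : δ v ≠ d := by
    intro hpd
    have hlast : IsLastIn r B v :=
      hv.of_sdiff_singleton (hpd ▸ (hδ v (hv.exists_rel hnt)).1)
    exact hv.1.2 (hB _ hpB v hv.1.1 (hδ.dominatesOn hlast (hnt.mono sdiff_subset)))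
  exact ⟨v, hv, ⟨hpB, hpd⟩, hdom⟩

theorem exists_adj_parents_not_adj [IsStrictTotalOrder V r] (h : IsCutVertex G A B c)
    (hδ : IsDominationMap G r δ) (hAfin : A.Finite) (hBfin : B.Finite) {a b d : V}
    (ha : a ∈ A) (hca : G.Adj c a) (hcd : c ≠ d) (hb : b ∈ B \ {d}) (hcb : G.Adj c b)
    (hA : ∀ p ∈ A, ∀ v ∈ A, DominatesOn G A p v → v = c)
    (hB : ∀ p ∈ B, ∀ v ∈ B, DominatesOn G B p v → v = d)
    (hBd : ∀ p ∈ B \ {d}, ∀ v ∈ B \ {d}, DominatesOn G (B \ {d}) p v → G.Adj v c ∧ p ≠ c) :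
    ∃ u v : V, G.Adj u v ∧ (∃ u₀, r u₀ u) ∧ (∃ v₀, r v₀ v) ∧
      δ u ≠ δ v ∧ ¬ G.Adj (δ u) (δ v) := by
  have hAnt : A.Nontrivial := ⟨a, ha, c, h.mem_left, hca.ne'⟩
  have hcA : IsLastIn r A c := h.isLastIn_left hδ hAfin hAnt hA
  have hpA : δ c ∈ A := h.parent_mem_left hδ hcA ha hca
  have hpc : δ c ≠ c := (hδ.dominatesOn hcA hAnt).1
  obtain ⟨v, hv, hqB, hdom⟩ :=
    h.exists_isLastIn_right_sdiff_singleton hδ hBfin hpA hpc hcd hb hcb hB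
  obtain ⟨hvc, hqc⟩ := hBd _ hqB v hv.1 hdom
  refine ⟨v, c, hvc, hv.exists_rel ⟨c, ⟨h.symm.mem_left, hcd⟩, b, hb, hcb.ne⟩,
    hcA.exists_rel hAnt, ?_, h.symm.not_adj hqB.1 hqc hpA hpc⟩
  exact fun heq => h.notMem_right hpA hpc (heq ▸ hqB.1)

end IsCutVertex

end CutVertex

section Wedge

variable {V W : Type*} {G : SimpleGraph V} {a : V} {H : SimpleGraph W} {b : W}

/-- The graph obtained from disjoint copies of `G` and `H` by identifying the vertex `a` of `G`
with the vertex `b` of `H`. The identified vertex is represented by `Sum.inl a`. -/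
def wedge (G : SimpleGraph V) (a : V) (H : SimpleGraph W) (b : W) :
    SimpleGraph (V ⊕ {w : W // w ≠ b}) where
  Adj
    | .inl u, .inl v => G.Adj u v
    | .inl u, .inr w => u = a ∧ H.Adj b w
    | .inr w, .inl u => u = a ∧ H.Adj b w
    | .inr w, .inr w' => H.Adj w w'
  symm := ⟨by
    rintro (u | w) (v | w') h
    exacts [G.adj_symm h, h, h, H.adj_symm h]⟩
  loopless := ⟨by
    rintro (u | w) h
    exacts [G.loopless.irrefl u h, H.loopless.irrefl w h]⟩

namespace wedge

/-- The copy of `G` in `wedge G a H b`. -/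
def inlEmbedding (G : SimpleGraph V) (a : V) (H : SimpleGraph W) (b : W) : G ↪g wedge G a H b where
  toFun := .inl
  inj' := Sum.inl_injective
  map_rel_iff' := Iff.rfl

open Classical in
/-- The copy of `H` in `wedge G a H b`; it sends `b` to the identified vertex `Sum.inl a`. -/
noncomputable def inrEmbedding (G : SimpleGraph V) (a : V) (H : SimpleGraph W) (b : W) :
    H ↪g wedge G a H b where
  toFun w := if h : w = b then .inl a else .inr ⟨w, h⟩
  inj' w w' h := by grind
  map_rel_iff' {w w'} := by
    by_cases hw : w = b <;> by_cases hw' : w' = b <;>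
      simp [hw, hw', wedge, H.adj_comm]

theorem inrEmbedding_base : inrEmbedding G a H b b = .inl a :=
  dif_pos rfl

theorem inrEmbedding_coe (w : {w // w ≠ b}) : inrEmbedding G a H b w = .inr w :=
  dif_neg w.2

theorem isCutVertex (G : SimpleGraph V) (a : V) (H : SimpleGraph W) (b : W) :
    IsCutVertex (wedge G a H b) (range (inlEmbedding G a H b)) (range (inrEmbedding G a H b))
      (.inl a) := by
  have inl_mem (u : V) : .inl u ∈ range (inlEmbedding G a H b) := ⟨u, rfl⟩
  have base_mem : .inl a ∈ range (inrEmbedding G a H b) := ⟨b, inrEmbedding_base⟩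
  have inr_mem (w : {w // w ≠ b}) : .inr w ∈ range (inrEmbedding G a H b) :=
    ⟨w, inrEmbedding_coe w⟩
  refine ⟨Subset.antisymm ?_ (singleton_subset_iff.2 ⟨inl_mem a, base_mem⟩), ?_⟩
  · rintro _ ⟨⟨u, rfl⟩, w, hw⟩
    obtain rfl | hwb := eq_or_ne w b
    · exact hw.symm.trans inrEmbedding_base
    · exact absurd ((inrEmbedding_coe ⟨w, hwb⟩).symm.trans hw) Sum.inr_ne_inl
  · rintro (u | w) (v | w') h
    · exact .inl ⟨inl_mem u, inl_mem v⟩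
    · exact .inr ⟨h.1 ▸ base_mem, inr_mem w'⟩
    · exact .inr ⟨inr_mem w, h.1 ▸ base_mem⟩
    · exact .inr ⟨inr_mem w, inr_mem w'⟩

theorem lex_inrEmbedding_iff {r : V → V → Prop} {s : W → W → Prop} (hb : ∀ w ≠ b, s b w)
    (w' : W) (w : {w // w ≠ b}) :
    Sum.Lex r (Subrel s (· ≠ b)) (inrEmbedding G a H b w') (.inr w) ↔ s w' w := by
  obtain rfl | hw' := eq_or_ne w' b
  · rw [inrEmbedding_base]
    exact iff_of_true (.sep a w) (hb w w.2)
  · rw [inrEmbedding_coe ⟨w', hw'⟩]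
    exact Sum.lex_inr_inr

theorem constructionOrderSpec {r : V → V → Prop} {s : W → W → Prop}
    (hr : ConstructionOrderSpec G r) (hs : ConstructionOrderSpec H s) (hb : ∀ w ≠ b, s b w) :
    ConstructionOrderSpec (wedge G a H b) (Sum.Lex r (Subrel s (· ≠ b))) := by
  rintro (u | w) hpred
  · obtain ⟨_, ⟨hq⟩⟩ := hpred
    obtain ⟨p, hpu, hdom⟩ := hr u ⟨_, hq⟩
    refine ⟨.inl p, .inl hpu, ((dominatesOn_image_iff (inlEmbedding G a H b)).2 hdom).mono ?_⟩
    rintro _ (⟨⟨hz⟩⟩ | rfl)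
    exacts [⟨_, .inl hz, rfl⟩, ⟨u, .inr rfl, rfl⟩]
  · obtain ⟨p, hpw, hne, hdom⟩ := hs w ⟨b, hb w w.2⟩
    refine ⟨inrEmbedding G a H b p, (lex_inrEmbedding_iff hb p w).2 hpw, ?_⟩
    rw [← inrEmbedding_coe w]
    refine ⟨(inrEmbedding G a H b).injective.ne hne, fun z hz hwz => ?_⟩
    obtain ⟨q, rfl⟩ : z ∈ range (inrEmbedding G a H b) := by
      obtain rfl | hadj := hwz
      · exact mem_range_self _
      · exact (isCutVertex G a H b).symm.mem_left_of_adj (mem_range_self _)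
          (inrEmbedding_coe w ▸ Sum.inr_ne_inl) hadj.symm
    simp only [(inrEmbedding G a H b).injective.eq_iff, (inrEmbedding G a H b).map_adj_iff,
      mem_ofPred_eq] at hz hwz ⊢
    rw [inrEmbedding_coe w, lex_inrEmbedding_iff hb] at hz
    exact hdom q hz hwz

theorem constructible {s : W → W → Prop} [IsWellOrder W s] (hG : Constructible G)
    (hs : ConstructionOrderSpec H s) (hb : ∀ w ≠ b, s b w) : Constructible (wedge G a H b) :=
  let ⟨_, _, hr⟩ := hG
  ⟨_, inferInstance, constructionOrderSpec hr hs hb⟩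

theorem exists_adj_parents_not_adj [Finite V] [Finite W] {a' : V} {b' d : W}
    (haa' : G.Adj a a') (hbb' : H.Adj b b') (hbd : b ≠ d) (hb'd : b' ≠ d)
    (hG : ∀ p v, Dominates G p v → v = a) (hH : ∀ p v, Dominates H p v → v = d)
    (hHd : ∀ p ≠ d, ∀ v ≠ d, DominatesOn H {d}ᶜ p v → H.Adj v b ∧ p ≠ b)
    {r : V ⊕ {w // w ≠ b} → V ⊕ {w // w ≠ b} → Prop} [IsStrictTotalOrder _ r]
    {δ : V ⊕ {w // w ≠ b} → V ⊕ {w // w ≠ b}} (hδ : IsDominationMap (wedge G a H b) r δ) :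
    ∃ u v, (wedge G a H b).Adj u v ∧ (∃ u₀, r u₀ u) ∧ (∃ v₀, r v₀ v) ∧
      δ u ≠ δ v ∧ ¬ (wedge G a H b).Adj (δ u) (δ v) := by
  let f := inlEmbedding G a H b
  let g := inrEmbedding G a H b
  have hcut : IsCutVertex (wedge G a H b) (range f) (range g) (g b) :=
    inrEmbedding_base (G := G) (H := H) ▸ isCutVertex G a H b
  have hfa : f a = g b := inrEmbedding_base.symm
  have hsdiff : range g \ {g d} = g '' {d}ᶜ := by
    rw [image_compl_eq_range_sdiff_image g.injective, image_singleton]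
  refine hcut.exists_adj_parents_not_adj hδ (finite_range f) (finite_range g)
    (mem_range_self a') (hfa ▸ f.map_adj_iff.2 haa') (g.injective.ne hbd)
    (hsdiff ▸ mem_image_of_mem g hb'd) (g.map_adj_iff.2 hbb') ?_ ?_ ?_
  · simp only [forall_mem_range, dominatesOn_range_iff, ← hfa, f.injective.eq_iff]
    exact hG
  · simp only [forall_mem_range, dominatesOn_range_iff, g.injective.eq_iff]
    exact hH
  · simp only [hsdiff, forall_mem_image, dominatesOn_image_iff, g.map_adj_iff, g.injective.ne_iff]
    exact fun p hp v hv => hHd p hp v hv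

end wedge

end Wedge

/-- The vertices of the graph `K`. -/
inductive VertexK
  | x | y | z | z' | t | t' | w
  deriving DecidableEq

instance : Fintype VertexK where
  elems := {.x, .y, .z, .z', .t, .t', .w}
  complete v := by cases v <;> decide

/-- The graph `K`, whose only dominated vertex is `x`; two copies of it are glued to form the
witness. -/
def graphK : SimpleGraph VertexK :=
  .fromEdgeSet ({s(.x, .y), s(.x, .t), s(.x, .t'), s(.y, .z), s(.y, .z'), s(.y, .t), s(.y, .t'),
    s(.z, .z'), s(.z, .t), s(.z, .w), s(.z', .t'), s(.z', .w), s(.t, .w), s(.t', .w)} :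
      Finset (Sym2 VertexK))

namespace graphK

instance : DecidableRel graphK.Adj :=
  inferInstanceAs (DecidableRel (SimpleGraph.fromEdgeSet _).Adj)

theorem dominates_iff {p v : VertexK} : Dominates graphK p v ↔ p = .y ∧ v = .x := by
  unfold Dominates
  decide +revert

theorem dominatesOn_compl_x_iff {p v : VertexK} (hp : p ≠ .x) (hv : v ≠ .x) :
    DominatesOn graphK {.x}ᶜ p v ↔ p = .z ∧ v = .t ∨ p = .z' ∧ v = .t' := by
  simp only [DominatesOn, mem_compl_iff, mem_singleton_iff]
  decide +revert

theorem adj_y_of_dominatesOn_compl_x {p v : VertexK} (hp : p ≠ .x) (hv : v ≠ .x)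
    (h : DominatesOn graphK {.x}ᶜ p v) : graphK.Adj v .y ∧ p ≠ .y := by
  obtain ⟨rfl, rfl⟩ | ⟨rfl, rfl⟩ := (dominatesOn_compl_x_iff hp hv).1 h <;> decide

/-- The position of a vertex in a construction order of `K` with root `y`; the parents of
`z, z', w, t, t', x` are `y, y, z, z, z', y`. -/
def position : VertexK → ℕ
  | .y => 0
  | .z => 1
  | .z' => 2
  | .w => 3
  | .t => 4
  | .t' => 5
  | .x => 6

theorem position_injective : position.Injective := by
  unfold Function.Injective
  decide

theorem constructionOrderSpec_position :
    ConstructionOrderSpec graphK ((· < ·).onFun position) := by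
  unfold ConstructionOrderSpec DominatesOn
  decide

instance : IsWellOrder VertexK ((· < ·).onFun position) :=
  position_injective.isWellOrder _

theorem constructible : Constructible graphK :=
  ⟨_, inferInstance, constructionOrderSpec_position⟩

theorem position_y_lt : ∀ v ≠ .y, position .y < position v := by
  decide

end graphK

theorem exists_finite_constructible_no_hom_domination_map :
    ∃ (V : Type) (_ : Finite V) (G : SimpleGraph V),
      Constructible G ∧
      ∀ r : V → V → Prop, IsWellOrder V r → ConstructionOrderSpec G r →
        ∀ δ : V → V, IsDominationMap G r δ →
          ∃ u v : V, G.Adj u v ∧ (∃ u₀, r u₀ u) ∧ (∃ v₀, r v₀ v) ∧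
            δ u ≠ δ v ∧ ¬ G.Adj (δ u) (δ v) := by
  have dominated_eq_x (p v : VertexK) (h : Dominates graphK p v) : v = .x :=
    (graphK.dominates_iff.1 h).2
  have hxy : graphK.Adj .x .y := by decide
  have hyz : graphK.Adj .y .z := by decide
  refine ⟨_, inferInstance, wedge graphK .x graphK .y, ?_, fun r _ _ δ hδ => ?_⟩
  · exact wedge.constructible graphK.constructible graphK.constructionOrderSpec_position
      graphK.position_y_lt
  · exact wedge.exists_adj_parents_not_adj hxy hyz (by decide) (by decide) dominated_eq_x
      dominated_eq_x (fun p hp v hv => graphK.adj_y_of_dominatesOn_compl_x hp hv) hδ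
end

section
/- Let G be a consistently locally constructible graph. Then G is a weak cop win. -/
universe u

/-- Given a cop strategy `σ` (a function of the robber's history of positions) and a robber
position sequence `r`, the cop's position at time `n`: the cop has seen the robber's first
`n` positions when making his `n`-th move. `copPos σ r 0 = σ []` is the cop's start. -/
def copPos {V : Type u} (σ : List V → V) (r : ℕ → V) (n : ℕ) : V :=
  σ (List.ofFn fun i : Fin n => r i.val)

/-- A cop strategy is legal if each successive position is equal or adjacent to the previous one. -/
def LegalCop {V : Type u} (G : SimpleGraph V) (σ : List V → V) : Prop :=
  ∀ l : List V, l ≠ [] → σ l = σ l.dropLast ∨ G.Adj (σ l.dropLast) (σ l)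

/-- A legal robber position sequence: each move is to an adjacent vertex or staying put. -/
def LegalRun {V : Type u} (G : SimpleGraph V) (r : ℕ → V) : Prop :=
  ∀ n : ℕ, r (n + 1) = r n ∨ G.Adj (r n) (r (n + 1))

/-- The cop catches the robber: at some time their positions coincide (either just after the
robber's move, or just after the cop's move). -/
def Caught {V : Type u} (σ : List V → V) (r : ℕ → V) : Prop :=
  ∃ n : ℕ, copPos σ r n = r n ∨ copPos σ r (n + 1) = r n

/-- `G` is cop-win: the cop has a legal strategy catching every legal robber play. -/
def CopWin {V : Type u} (G : SimpleGraph V) : Prop :=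
  ∃ σ : List V → V, LegalCop G σ ∧ ∀ r : ℕ → V, LegalRun G r → Caught σ r

/-- `G` is a weak cop win: the cop has a legal strategy guaranteeing that in every legal robber
play, either the robber is caught or the robber occupies each vertex at only finitely many times. -/
def WeakCopWin {V : Type u} (G : SimpleGraph V) : Prop :=
  ∃ σ : List V → V, LegalCop G σ ∧
    ∀ r : ℕ → V, LegalRun G r → Caught σ r ∨ ∀ v : V, {n : ℕ | r n = v}.Finite

/-- The subgraph of `G` induced by the finite set `S` is constructible with root `root` and
domination map `δ`: there is an enumeration of `S` starting at `root` in which every later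
vertex `e k` is dominated, in the subgraph induced by the vertices added so far, by the
strictly earlier vertex `δ (e k)`. -/
def ConstructibleOn {V : Type u} (G : SimpleGraph V) (S : Set V) (root : V) (δ : V → V) : Prop :=
  ∃ (n : ℕ) (e : Fin (n + 1) → V),
    Function.Injective e ∧ Set.range e = S ∧ e 0 = root ∧
    ∀ k : Fin (n + 1), k ≠ 0 →
      (∃ j : Fin (n + 1), j < k ∧ e j = δ (e k)) ∧
      DominatesOn G (e '' {j | j ≤ k}) (δ (e k)) (e k)

/-- `G` is consistently locally constructible: there is a nested sequence of finite induced
subgraphs `G[S i]` covering `G`, with roots `v i` and domination maps `δ i`, each `G[S i]`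
being constructible with root `v i` and domination map `δ i`, and the maps `δ i` agreeing
wherever they are both defined. -/
def ConsistentlyLocallyConstructible {V : Type u} (G : SimpleGraph V) : Prop :=
  ∃ (S : ℕ → Set V) (v : ℕ → V) (δ : ℕ → V → V),
    (∀ i, (S i).Finite) ∧ Monotone S ∧ (⋃ i, S i) = Set.univ ∧
    (∀ i, v i ∈ S i) ∧
    (∀ i, ConstructibleOn G (S i) (v i) (δ i)) ∧
    (∀ i j x, x ∈ S i → x ≠ v i → x ∈ S j → x ≠ v j → δ i x = δ j x)

/-!
Following parents along a domination map is a graph retraction onto the vertices of bounded rank,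
so the image of the robber under it (his *shadow*) is a legal walk. Once the cop stands on an
ancestor `c` of the robber's vertex, let `t` be the child of `c` in the direction of the robber.
Since `c` dominates `t` among the vertices of rank at most `rank t`, the cop can step from `c` to
the shadow of the robber below `rank t`. The ranks of the successive `t` strictly increase. While
the robber is at a fixed vertex `v`, the vertex `t` is one of the iterated parents of `v`, whose
ranks decrease, so `v` is visited only finitely often. To reach an ancestor of the robber in the
first place, the cop follows his own parents: they eventually coincide with those of any vertex that
the robber visits infinitely often.

The ranks of the finite pieces need not agree with each other. Along an ultrafilter on the index set
they have a limit, with values in a linearly ordered ultrapower of `ℕ`, and nothing above needs the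
ranks to be well-founded.
-/

section Game

variable {V : Type u} {G : SimpleGraph V}

/-- `y` lies in the closed neighbourhood of `x`, that is, a player at `x` may move to `y`.
The disjuncts are ordered as in `DominatesOn`, `LegalRun` and `LegalCop`. -/
def ClosedAdj (G : SimpleGraph V) (x y : V) : Prop :=
  y = x ∨ G.Adj x y

theorem ClosedAdj.refl (x : V) : ClosedAdj G x x :=
  Or.inl rfl

theorem ClosedAdj.symm {x y : V} (h : ClosedAdj G x y) : ClosedAdj G y x :=
  h.imp Eq.symm SimpleGraph.Adj.symm

open Classical in
/-- The cop's position when he moves by the rule `step c r r'`, where `c` is his own position and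
the robber has just moved from `r` to `r'`. The robber's positions are listed latest first. The cop
stays at `start` until the robber has made a move, and whenever the rule prescribes an illegal
move. -/
noncomputable def copOfStep (G : SimpleGraph V) (start : V) (step : V → V → V → V) : List V → V
  | [] => start
  | [_] => start
  | r' :: r :: l =>
    let c := copOfStep G start step (r :: l)
    if ClosedAdj G c (step c r r') then step c r r' else c

theorem legalCop_copOfStep (start : V) (step : V → V → V → V) :
    LegalCop G fun l ↦ copOfStep G start step l.reverse := by
  intro l _
  change ClosedAdj G (copOfStep G start step l.dropLast.reverse) (copOfStep G start step l.reverse)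
  rw [← List.tail_reverse]
  match l.reverse with
  | [] => exact ClosedAdj.refl _
  | [_] => exact ClosedAdj.refl _
  | r' :: r :: l =>
    simp only [List.tail_cons, copOfStep]
    split_ifs with hlegal
    · exact hlegal
    · exact ClosedAdj.refl _

theorem copPos_copOfStep_add_two {start : V} {step : V → V → V → V}
    (hstep : ∀ c r r', ClosedAdj G r r' → ClosedAdj G c (step c r r'))
    {r : ℕ → V} (hr : LegalRun G r) (n : ℕ) :
    let σ : List V → V := fun l ↦ copOfStep G start step l.reverse
    copPos σ r (n + 2) = step (copPos σ r (n + 1)) (r n) (r (n + 1)) := by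
  simp only [copPos, List.ofFn_succ_last, List.reverse_append, List.reverse_singleton,
    List.singleton_append, copOfStep, Fin.val_last, Fin.val_castSucc]
  exact if_pos (hstep _ _ _ (hr n))

end Game

section Shadow

variable {V : Type u} {α : Type*} [LinearOrder α] {G : SimpleGraph V}
  {rank : V → α} {parent : V → V}

/-- `y` is an iterated parent of `x`, possibly `x` itself. -/
def IsAncestor (parent : V → V) (y x : V) : Prop :=
  ∃ n : ℕ, parent^[n] x = y

/-- `parent` is a domination map on all of `G`, where the construction order is replaced by an
arbitrary ranking: every vertex is fixed by `parent`, or it has a parent of smaller rank that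
dominates it among the vertices of at most the same rank, and any two vertices have a common
ancestor. Distinct vertices may have the same rank. -/
structure IsDominationRank (G : SimpleGraph V) (rank : V → α) (parent : V → V) : Prop where
  parent_eq_or_rank_lt : ∀ x, parent x = x ∨ rank (parent x) < rank x
  closedAdj_parent : ∀ x z, rank z ≤ rank x → ClosedAdj G x z → ClosedAdj G (parent x) z
  exists_common_ancestor : ∀ x y, ∃ z, IsAncestor parent z x ∧ IsAncestor parent z y

/-- The number of parent steps from `x` down to the vertices of rank at most `rank t`
(`0` if they are never reached). -/
noncomputable def shadowDepth (rank : V → α) (parent : V → V) (t x : V) : ℕ :=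
  sInf {n | rank (parent^[n] x) ≤ rank t}

/-- The first iterated parent of `x` of rank at most `rank t`: the image of `x` under the retraction
onto the vertices below `t`. -/
noncomputable def shadow (rank : V → α) (parent : V → V) (t x : V) : V :=
  parent^[shadowDepth rank parent t x] x

theorem isAncestor_shadow (t x : V) : IsAncestor parent (shadow rank parent t x) x :=
  ⟨_, rfl⟩

theorem isAncestor_shadow_of_rank_le {t x y : V} (hyx : IsAncestor parent y x)
    (hyt : rank y ≤ rank t) : IsAncestor parent y (shadow rank parent t x) := by
  obtain ⟨n, rfl⟩ := hyx
  have hdepth : shadowDepth rank parent t x ≤ n := Nat.sInf_le hyt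
  refine ⟨n - shadowDepth rank parent t x, ?_⟩
  rw [shadow, ← Function.iterate_add_apply, Nat.sub_add_cancel hdepth]

theorem shadowDepth_eq_zero {t x : V} (hx : rank x ≤ rank t) : shadowDepth rank parent t x = 0 :=
  Nat.sInf_eq_zero.2 (Or.inl hx)

theorem shadow_eq_self {t x : V} (hx : rank x ≤ rank t) : shadow rank parent t x = x := by
  rw [shadow, shadowDepth_eq_zero hx, Function.iterate_zero_apply]

namespace IsDominationRank

theorem antitone_rank_iterate (h : IsDominationRank G rank parent) (x : V) :
    Antitone fun n ↦ rank (parent^[n] x) := by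
  refine antitone_nat_of_succ_le fun n ↦ ?_
  rw [Function.iterate_succ_apply']
  exact (h.parent_eq_or_rank_lt _).elim (fun hfix ↦ (congrArg rank hfix).le) le_of_lt

theorem rank_le_of_isAncestor (h : IsDominationRank G rank parent) {x y : V}
    (hyx : IsAncestor parent y x) : rank y ≤ rank x := by
  obtain ⟨n, rfl⟩ := hyx
  exact h.antitone_rank_iterate x n.zero_le

theorem eq_of_isAncestor_of_rank_le (h : IsDominationRank G rank parent) {x y : V}
    (hyx : IsAncestor parent y x) (hrank : rank x ≤ rank y) : y = x := by
  obtain ⟨_ | n, rfl⟩ := hyx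
  · rfl
  · rcases h.parent_eq_or_rank_lt x with hfix | hlt
    · exact Function.iterate_fixed hfix _
    · exact absurd (hrank.trans (h.rank_le_of_isAncestor ⟨n, rfl⟩)) hlt.not_ge

theorem exists_rank_iterate_le (h : IsDominationRank G rank parent) (t x : V) :
    ∃ n, rank (parent^[n] x) ≤ rank t := by
  obtain ⟨_, ⟨n, rfl⟩, hzt⟩ := h.exists_common_ancestor x t
  exact ⟨n, h.rank_le_of_isAncestor hzt⟩

theorem rank_shadow_le (h : IsDominationRank G rank parent) (t x : V) :
    rank (shadow rank parent t x) ≤ rank t :=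
  Nat.sInf_mem (h.exists_rank_iterate_le t x)

theorem shadow_eq_of_isAncestor (h : IsDominationRank G rank parent) {t x : V}
    (htx : IsAncestor parent t x) : shadow rank parent t x = t :=
  (h.eq_of_isAncestor_of_rank_le (isAncestor_shadow_of_rank_le htx le_rfl)
    (h.rank_shadow_le t x)).symm

theorem shadowDepth_eq_succ (h : IsDominationRank G rank parent) {t x : V} (hx : rank t < rank x) :
    shadowDepth rank parent t x = shadowDepth rank parent t (parent x) + 1 := by
  have hpos : 1 ≤ shadowDepth rank parent t x := by
    refine Nat.one_le_iff_ne_zero.2 fun hzero ↦ hx.not_ge ?_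
    simpa only [shadow, hzero, Function.iterate_zero_apply] using h.rank_shadow_le t x
  exact (Nat.sInf_add (p := fun n ↦ rank (parent^[n] x) ≤ rank t) hpos).symm

theorem shadow_eq_shadow_parent (h : IsDominationRank G rank parent) {t x : V}
    (hx : rank t < rank x) : shadow rank parent t x = shadow rank parent t (parent x) := by
  rw [shadow, h.shadowDepth_eq_succ hx, Function.iterate_succ_apply, shadow]

theorem closedAdj_shadow (h : IsDominationRank G rank parent) (t : V) {x y : V}
    (hxy : ClosedAdj G x y) : ClosedAdj G (shadow rank parent t x) (shadow rank parent t y) := by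
  induction hN : shadowDepth rank parent t x + shadowDepth rank parent t y
    using Nat.strong_induction_on generalizing x y with
  | _ N ih =>
    wlog hle : rank x ≤ rank y generalizing x y
    · exact (this hxy.symm (by rwa [add_comm]) (le_of_not_ge hle)).symm
    rcases le_or_gt (rank y) (rank t) with hyt | hty
    · rwa [shadow_eq_self (hle.trans hyt), shadow_eq_self hyt]
    · rw [h.shadow_eq_shadow_parent hty]
      have hdepth := h.shadowDepth_eq_succ hty
      exact ih _ (by lia) (h.closedAdj_parent y x hle hxy.symm).symm rfl

end IsDominationRank

end Shadow

section Chase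

variable {V : Type u} {α : Type*} [LinearOrder α] {G : SimpleGraph V}
  {rank : V → α} {parent : V → V}

/-- `t` is the child of `c` on the path of iterated parents from `r` down to `c`. -/
def IsChildToward (parent : V → V) (c r t : V) : Prop :=
  IsAncestor parent t r ∧ t ≠ c ∧ parent t = c

open Classical in
/-- The move of a cop at `c` when the robber has moved from `r` to `r'`: he moves to the robber's
shadow below the child of `c` toward `r`, if there is one, and follows his own parents otherwise. -/
noncomputable def chase (rank : V → α) (parent : V → V) (c r r' : V) : V :=
  if ht : ∃ t, IsChildToward parent c r t then shadow rank parent ht.choose r' else parent c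

theorem exists_isChildToward {c r : V} (hcr : IsAncestor parent c r) (hne : c ≠ r) :
    ∃ t, IsChildToward parent c r t := by
  obtain ⟨n, hn⟩ := hcr
  induction n with
  | zero => exact absurd hn.symm hne
  | succ n ih =>
    by_cases hc : parent^[n] r = c
    · exact ih hc
    · exact ⟨parent^[n] r, ⟨n, rfl⟩, hc, by rw [← hn, Function.iterate_succ_apply']⟩

theorem chase_eq_parent {c r : V} (hcr : ¬ IsAncestor parent c r) (r' : V) :
    chase rank parent c r r' = parent c := by
  refine dif_neg ?_
  rintro ⟨_, ⟨n, rfl⟩, -, hparent⟩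
  exact hcr ⟨n + 1, by rw [Function.iterate_succ_apply', hparent]⟩

theorem exists_isChildToward_chase_eq_shadow {c r : V} (hcr : IsAncestor parent c r) (hne : c ≠ r)
    (r' : V) : ∃ t, IsChildToward parent c r t ∧
      chase rank parent c r r' = shadow rank parent t r' :=
  have ht := exists_isChildToward hcr hne
  ⟨ht.choose, ht.choose_spec, dif_pos ht⟩

namespace IsDominationRank

theorem closedAdj_chase (h : IsDominationRank G rank parent) (c : V) {r r' : V}
    (hrr' : ClosedAdj G r r') : ClosedAdj G c (chase rank parent c r r') := by
  rw [chase]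
  split_ifs with ht
  · obtain ⟨htr, -, hparent⟩ := ht.choose_spec
    set t := ht.choose
    have hshadow : ClosedAdj G t (shadow rank parent t r') := by
      simpa only [h.shadow_eq_of_isAncestor htr] using h.closedAdj_shadow t hrr'
    simpa only [hparent] using h.closedAdj_parent t _ (h.rank_shadow_le t r') hshadow
  · exact (h.closedAdj_parent c c le_rfl (ClosedAdj.refl c)).symm

theorem rank_lt_of_isChildToward_shadow (h : IsDominationRank G rank parent) {r t t' : V}
    (ht' : IsChildToward parent (shadow rank parent t r) r t') : rank t < rank t' := by
  obtain ⟨ht'r, hne, hparent⟩ := ht'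
  by_contra! hle
  have hrank : rank t' ≤ rank (parent t') :=
    hparent ▸ h.rank_le_of_isAncestor (isAncestor_shadow_of_rank_le ht'r hle)
  exact hne ((h.eq_of_isAncestor_of_rank_le ⟨1, rfl⟩ hrank).symm.trans hparent)

theorem finite_visits_of_strictMono_rank (h : IsDominationRank G rank parent) {r t : ℕ → V}
    (htr : ∀ n, IsAncestor parent (t n) (r n)) (hmono : StrictMono fun n ↦ rank (t n)) (v : V) :
    {n | r n = v}.Finite := by
  by_contra hinf
  obtain ⟨visit, hvisit_mono, hvisit⟩ :=
    Filter.extraction_of_frequently_atTop (Nat.frequently_atTop_iff_infinite.2 hinf)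
  choose depth hdepth using htr
  have htarget (k : ℕ) : parent^[depth (visit k)] v = t (visit k) := hvisit k ▸ hdepth (visit k)
  refine not_strictAnti_of_wellFoundedLT (fun k ↦ depth (visit k)) fun k l hkl ↦ ?_
  refine (h.antitone_rank_iterate v).reflect_lt ?_
  simpa only [htarget] using hmono (hvisit_mono hkl)

end IsDominationRank

section Play

variable {c r : ℕ → V}

theorem cop_eq_iterate_parent
    (hc : ∀ n, c (n + 1) = chase rank parent (c n) (r n) (r (n + 1)))
    (hnot : ∀ n, ¬ IsAncestor parent (c n) (r n)) (n : ℕ) : c n = parent^[n] (c 0) := by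
  induction n with
  | zero => rfl
  | succ n ih => rw [hc, chase_eq_parent (hnot n), ih, Function.iterate_succ_apply']

theorem isAncestor_of_isAncestor_zero
    (hc : ∀ n, c (n + 1) = chase rank parent (c n) (r n) (r (n + 1)))
    (hne : ∀ n, c n ≠ r n) (h₀ : IsAncestor parent (c 0) (r 0)) (n : ℕ) :
    IsAncestor parent (c n) (r n) := by
  induction n with
  | zero => exact h₀
  | succ n ih =>
    obtain ⟨t, -, hshadow⟩ := exists_isChildToward_chase_eq_shadow (rank := rank) ih (hne n) _
    rw [hc, hshadow]
    exact isAncestor_shadow _ _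

namespace IsDominationRank

theorem exists_isAncestor_of_infinite_visits (h : IsDominationRank G rank parent)
    (hc : ∀ n, c (n + 1) = chase rank parent (c n) (r n) (r (n + 1)))
    {v : V} (hv : {n | r n = v}.Infinite) : ∃ n, IsAncestor parent (c n) (r n) := by
  by_contra! hnot
  obtain ⟨_, ⟨p, rfl⟩, ⟨q, hpq⟩⟩ := h.exists_common_ancestor v (c 0)
  obtain ⟨n, rfl, hqn⟩ := hv.exists_gt q
  refine hnot n ⟨n - q + p, ?_⟩
  rw [cop_eq_iterate_parent hc hnot n, Function.iterate_add_apply, ← hpq,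
    ← Function.iterate_add_apply, Nat.sub_add_cancel hqn.le]

theorem finite_visits_of_isAncestor_zero (h : IsDominationRank G rank parent)
    (hc : ∀ n, c (n + 1) = chase rank parent (c n) (r n) (r (n + 1)))
    (hne : ∀ n, c n ≠ r n) (h₀ : IsAncestor parent (c 0) (r 0)) (v : V) : {n | r n = v}.Finite := by
  choose t ht hshadow using fun n ↦ exists_isChildToward_chase_eq_shadow (rank := rank)
    (isAncestor_of_isAncestor_zero hc hne h₀ n) (hne n) (r (n + 1))
  refine h.finite_visits_of_strictMono_rank (fun n ↦ (ht n).1) (strictMono_nat_of_lt_succ ?_) v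
  intro n
  refine h.rank_lt_of_isChildToward_shadow (r := r (n + 1)) ?_
  rw [← hshadow, ← hc]
  exact ht (n + 1)

theorem finite_visits (h : IsDominationRank G rank parent)
    (hc : ∀ n, c (n + 1) = chase rank parent (c n) (r n) (r (n + 1)))
    (hne : ∀ n, c n ≠ r n) (v : V) : {n | r n = v}.Finite := by
  by_contra hinf
  obtain ⟨k, hk⟩ := h.exists_isAncestor_of_infinite_visits hc hinf
  have hfreq : ∃ᶠ n in Filter.atTop, r (n + k) = v := by
    have hinf' : ∃ᶠ n in Filter.atTop, r n = v := Nat.frequently_atTop_iff_infinite.2 hinf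
    rwa [← Filter.map_add_atTop_eq_nat k] at hinf'
  refine Nat.frequently_atTop_iff_infinite.1 hfreq ?_
  refine h.finite_visits_of_isAncestor_zero (c := fun n ↦ c (n + k)) ?_ (fun n ↦ hne (n + k)) ?_ v
  · intro n
    simpa only [Nat.add_right_comm] using hc (n + k)
  · simpa only [zero_add] using hk

end IsDominationRank

end Play

theorem IsDominationRank.weakCopWin [Nonempty V] (h : IsDominationRank G rank parent) :
    WeakCopWin G := by
  let start : V := Classical.arbitrary V
  refine ⟨_, legalCop_copOfStep start (chase rank parent), fun r hr ↦ ?_⟩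
  refine or_iff_not_imp_left.2 fun hfree ↦ ?_
  refine h.finite_visits (fun n ↦ ?_) fun n hcatch ↦ hfree ⟨n, Or.inr hcatch⟩
  exact copPos_copOfStep_add_two (fun c _ _ ↦ h.closedAdj_chase c) hr n

end Chase

section Limit

variable {V : Type u} {G : SimpleGraph V}

/-- `rank` orders the vertices of `G[S]` like a construction order with the given root
and domination map `δ`. It is a total function whose values outside `S` are irrelevant. -/
structure IsDominationRankOn (G : SimpleGraph V) (S : Set V) (root : V) (δ : V → V)
    (rank : V → ℕ) : Prop where
  parent_mem : ∀ x ∈ S, x ≠ root → δ x ∈ S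
  rank_parent_lt : ∀ x ∈ S, x ≠ root → rank (δ x) < rank x
  closedAdj_parent : ∀ x ∈ S, x ≠ root → ∀ z ∈ S, rank z ≤ rank x →
    ClosedAdj G x z → ClosedAdj G (δ x) z

theorem ConstructibleOn.exists_isDominationRankOn {S : Set V} {root : V} {δ : V → V}
    (h : ConstructibleOn G S root δ) : ∃ rank, IsDominationRankOn G S root δ rank := by
  obtain ⟨n, e, he, rfl, rfl, hδ⟩ := h
  have hinv (k : Fin (n + 1)) : Function.invFun e (e k) = k := Function.leftInverse_invFun he k
  refine ⟨fun x ↦ (Function.invFun e x).val, ?_, ?_, ?_⟩ <;> rintro _ ⟨k, rfl⟩ hk <;>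
    obtain ⟨⟨j, hjk, hj⟩, -, hdom⟩ := hδ k (ne_of_apply_ne e hk)
  · exact ⟨j, hj⟩
  · simpa only [← hj, hinv, Fin.val_fin_lt] using hjk
  · rintro _ ⟨i, rfl⟩ hik
    simp only [hinv] at hik
    exact hdom (e i) ⟨i, hik, rfl⟩

variable {ι : Type*} {U : Ultrafilter ι} {S : ι → Set V} {root : ι → V} {δ : ι → V → V}
  {f : ι → V → ℕ} {parent : V → V}

/-- The limit along `U` of the ranks `f i`, in the ultrapower of `ℕ`. -/
def limitRank (U : Ultrafilter ι) (f : ι → V → ℕ) (x : V) : (U : Filter ι).Germ ℕ :=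
  ((fun i ↦ f i x : ι → ℕ) : (U : Filter ι).Germ ℕ)

/-- `parent` is the limit along `U` of the domination maps `δ i`, each extended to fix its root. -/
def IsLimitParent (U : Ultrafilter ι) (root : ι → V) (δ : ι → V → V) (parent : V → V) : Prop :=
  ∀ x, (∀ᶠ i in U, x = root i ∧ parent x = x) ∨ ∀ᶠ i in U, x ≠ root i ∧ parent x = δ i x

/-- The domination maps `δ i` agree wherever they are defined. As total functions they carry no
information at `root i` and outside `S i`. -/
def AgreeOffRoots (S : ι → Set V) (root : ι → V) (δ : ι → V → V) : Prop :=
  ∀ i j x, x ∈ S i → x ≠ root i → x ∈ S j → x ≠ root j → δ i x = δ j x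

theorem exists_isLimitParent (hmem : ∀ x, ∀ᶠ i in U, x ∈ S i) (hcons : AgreeOffRoots S root δ) :
    ∃ parent, IsLimitParent U root δ parent := by
  have hlimit (x : V) : ∃ y, (∀ᶠ i in U, x = root i ∧ y = x) ∨
      ∀ᶠ i in U, x ≠ root i ∧ y = δ i x := by
    rcases U.em (fun i ↦ x = root i) with hroot | hroot
    · exact ⟨x, Or.inl (hroot.mono fun i hi ↦ ⟨hi, rfl⟩)⟩
    · obtain ⟨j, hxj, hj⟩ := ((hmem x).and hroot).exists
      refine ⟨δ j x, Or.inr ?_⟩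
      filter_upwards [hmem x, hroot] with i hxi hi
      exact ⟨hi, hcons j i x hxj hj hxi hi⟩
  choose parent hparent using hlimit
  exact ⟨parent, hparent⟩

namespace IsLimitParent

theorem eq_or_limitRank_lt (hparent : IsLimitParent U root δ parent)
    (hmem : ∀ x, ∀ᶠ i in U, x ∈ S i)
    (hf : ∀ i, IsDominationRankOn G (S i) (root i) (δ i) (f i)) (x : V) :
    parent x = x ∨ limitRank U f (parent x) < limitRank U f x := by
  refine (hparent x).imp (fun hroot ↦ hroot.exists.choose_spec.2) fun hx ↦ ?_
  refine Filter.Germ.coe_lt.2 ?_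
  filter_upwards [hmem x, hx] with i hxi ⟨hne, hδ⟩
  exact hδ ▸ (hf i).rank_parent_lt x hxi hne

theorem closedAdj_of_limitRank_le (hparent : IsLimitParent U root δ parent)
    (hmem : ∀ x, ∀ᶠ i in U, x ∈ S i)
    (hf : ∀ i, IsDominationRankOn G (S i) (root i) (δ i) (f i))
    (x z : V) (hzx : limitRank U f z ≤ limitRank U f x) (hadj : ClosedAdj G x z) :
    ClosedAdj G (parent x) z := by
  rcases hparent x with hroot | hx
  · obtain ⟨i, -, hfix⟩ := hroot.exists
    rwa [hfix]
  · obtain ⟨i, hle, ⟨hne, hδ⟩, hxi, hzi⟩ :=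
      ((Filter.Germ.coe_le.1 hzx).and (hx.and ((hmem x).and (hmem z)))).exists
    exact hδ ▸ (hf i).closedAdj_parent x hxi hne z hzi hle hadj

theorem eventually_eq_root_of_fixed (hparent : IsLimitParent U root δ parent)
    (hmem : ∀ x, ∀ᶠ i in U, x ∈ S i)
    (hf : ∀ i, IsDominationRankOn G (S i) (root i) (δ i) (f i))
    {x : V} (hfix : parent x = x) : ∀ᶠ i in U, x = root i := by
  refine (hparent x).elim (fun hroot ↦ hroot.mono fun i hi ↦ hi.1) fun hx ↦ ?_
  obtain ⟨i, hxi, hne, hδ⟩ := ((hmem x).and hx).exists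
  exact absurd (congrArg (f i) (hδ.symm.trans hfix)) ((hf i).rank_parent_lt x hxi hne).ne

theorem eventually_forall_fixed_eq_root (hparent : IsLimitParent U root δ parent)
    (hmem : ∀ x, ∀ᶠ i in U, x ∈ S i)
    (hf : ∀ i, IsDominationRankOn G (S i) (root i) (δ i) (f i)) :
    ∀ᶠ i in U, ∀ x, parent x = x → x = root i := by
  by_cases hex : ∃ x, parent x = x
  · obtain ⟨x, hx⟩ := hex
    have hroot := hparent.eventually_eq_root_of_fixed hmem hf hx
    filter_upwards [hroot] with i hi y hy
    obtain ⟨j, hxj, hyj⟩ :=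
      (hroot.and (hparent.eventually_eq_root_of_fixed hmem hf hy)).exists
    rw [hyj, ← hxj, hi]
  · exact Filter.Eventually.of_forall fun i x hx ↦ absurd ⟨x, hx⟩ hex

theorem eq_of_parent_ne (hparent : IsLimitParent U root δ parent)
    (hmem : ∀ x, ∀ᶠ i in U, x ∈ S i) (hcons : AgreeOffRoots S root δ)
    {i : ι} {x : V} (hxi : x ∈ S i) (hi : x ≠ root i) (hx : parent x ≠ x) :
    parent x = δ i x := by
  rcases hparent x with hroot | hlim
  · exact absurd hroot.exists.choose_spec.2 hx
  · obtain ⟨j, hxj, hj, hδ⟩ := ((hmem x).and hlim).exists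
    exact hδ.trans (hcons j i x hxj hj hxi hi)

theorem isAncestor_root (hparent : IsLimitParent U root δ parent)
    (hmem : ∀ x, ∀ᶠ i in U, x ∈ S i)
    (hf : ∀ i, IsDominationRankOn G (S i) (root i) (δ i) (f i))
    (hcons : AgreeOffRoots S root δ) {i : ι} (hfix : ∀ x, parent x = x → x = root i)
    {x : V} (hx : x ∈ S i) :
    IsAncestor parent (root i) x := by
  induction hN : f i x using Nat.strong_induction_on generalizing x with
  | _ N ih =>
    by_cases hi : x = root i
    · exact ⟨0, hi⟩
    · have hδ : parent x = δ i x :=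
        hparent.eq_of_parent_ne hmem hcons hx hi fun hx' ↦ hi (hfix x hx')
      obtain ⟨n, hn⟩ := ih _ (hN ▸ (hf i).rank_parent_lt x hx hi) ((hf i).parent_mem x hx hi) rfl
      exact ⟨n + 1, by rw [Function.iterate_succ_apply, hδ, hn]⟩

theorem isDominationRank (hparent : IsLimitParent U root δ parent)
    (hmem : ∀ x, ∀ᶠ i in U, x ∈ S i)
    (hf : ∀ i, IsDominationRankOn G (S i) (root i) (δ i) (f i))
    (hcons : AgreeOffRoots S root δ) :
    IsDominationRank G (limitRank U f) parent where
  parent_eq_or_rank_lt := hparent.eq_or_limitRank_lt hmem hf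
  closedAdj_parent := hparent.closedAdj_of_limitRank_le hmem hf
  exists_common_ancestor x y := by
    obtain ⟨i, hfix, hxi, hyi⟩ := ((hparent.eventually_forall_fixed_eq_root hmem hf).and
      ((hmem x).and (hmem y))).exists
    exact ⟨root i, hparent.isAncestor_root hmem hf hcons hfix hxi,
      hparent.isAncestor_root hmem hf hcons hfix hyi⟩

end IsLimitParent

end Limit

theorem weakCopWin_of_consistentlyLocallyConstructible_general {V : Type u} (G : SimpleGraph V)
    {ι : Type*} [Preorder ι] [IsDirectedOrder ι] [Nonempty ι]
    (S : ι → Set V) (v : ι → V) (δ : ι → V → V) (hmono : Monotone S) (hcover : ⋃ i, S i = Set.univ)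
    (hcon : ∀ i, ConstructibleOn G (S i) (v i) (δ i))
    (hcons : ∀ i j x, x ∈ S i → x ≠ v i → x ∈ S j → x ≠ v j → δ i x = δ j x) :
    WeakCopWin G := by
  let U : Ultrafilter ι := Ultrafilter.of Filter.atTop
  have hmem (x : V) : ∀ᶠ i in U, x ∈ S i := by
    obtain ⟨i, hi⟩ := Set.iUnion_eq_univ_iff.1 hcover x
    exact Ultrafilter.of_le _ ((Filter.eventually_ge_atTop i).mono fun j hij ↦ hmono hij hi)
  choose f hf using fun i ↦ (hcon i).exists_isDominationRankOn
  obtain ⟨parent, hparent⟩ := exists_isLimitParent hmem hcons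
  have : Nonempty V := ‹Nonempty ι›.map v
  exact (hparent.isDominationRank hmem hf hcons).weakCopWin

theorem weakCopWin_of_consistentlyLocallyConstructible {V : Type u} (G : SimpleGraph V)
    (h : ConsistentlyLocallyConstructible G) : WeakCopWin G := by
  obtain ⟨S, v, δ, -, hmono, hcover, -, hcon, hcons⟩ := h
  exact weakCopWin_of_consistentlyLocallyConstructible_general G S v δ hmono hcover hcon hcons
end

section
/- Let G be the graph obtained from countably infinitely many pairwise disjoint copies K_1, K_2, ... of the graph K (with the vertices of K_i written x_i, y_i, z_i, z'_i, t_i, t'_i, w_i) together with two further vertices A and B, where A is joined to x_i and y_i for every i, B is joined to x_i for every i, and A is joined to B. Then G is constructible and its construction time is exactly ω + 1. -/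
universe u

/-- The set of ordinals arising as the order type of some construction order of `G`.
The construction time of `G` is the least element of this set. -/
def constructionTimes {V : Type u} (G : SimpleGraph V) : Set Ordinal.{u} :=
  {o | ∃ (r : V → V → Prop) (_ : IsWellOrder V r), ConstructionOrderSpec G r ∧ Ordinal.type r = o}

/-- Vertices: two special vertices `A` and `B`, and for each `i : ℕ` a disjoint copy `K_{i+1}`
of `K` with vertices `X i, Y i, Z i, Z' i, T i, T' i, W i`. -/
inductive OmegaVert : Type
  | A | B | X (i : ℕ) | Y (i : ℕ) | Z (i : ℕ) | Z' (i : ℕ) | T (i : ℕ) | T' (i : ℕ) | W (i : ℕ)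

open OmegaVert in
/-- The edges: the `K`-edges within each copy, `A` joined to every `x_i` and `y_i`, `B` joined
to every `x_i`, and `A` joined to `B`. -/
def OmegaRel : OmegaVert → OmegaVert → Prop := fun a b =>
  (∃ i : ℕ,
    (a = X i ∧ b = Y i) ∨ (a = X i ∧ b = T i) ∨ (a = X i ∧ b = T' i) ∨
    (a = Y i ∧ b = Z i) ∨ (a = Y i ∧ b = Z' i) ∨ (a = Y i ∧ b = T i) ∨ (a = Y i ∧ b = T' i) ∨
    (a = Z i ∧ b = Z' i) ∨ (a = Z i ∧ b = T i) ∨ (a = Z i ∧ b = W i) ∨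
    (a = Z' i ∧ b = T' i) ∨ (a = Z' i ∧ b = W i) ∨
    (a = T i ∧ b = W i) ∨ (a = T' i ∧ b = W i) ∨
    (a = A ∧ b = X i) ∨ (a = A ∧ b = Y i) ∨ (a = B ∧ b = X i)) ∨
  (a = A ∧ b = B)

/-- The graph of Theorem 10. -/
def OmegaGraph : SimpleGraph OmegaVert := SimpleGraph.fromRel OmegaRel

/-!
Listing `A`, then the copies of `K` one after another, and `B` at the very end is a construction
order of type `ω + 1`: as long as `B` is absent, each copy can be built from `A` in seven steps.
Conversely, in the subgraph induced by `A`, `B` and one copy of `K`, no vertex of the copy is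
dominated, because for each of its vertices `v` the only vertex adjacent or equal to all of `N[v]`
is `v` itself. So the last vertex of every copy precedes `A` or `B`. In an order of type at most `ω`
only finitely many vertices do so, which leaves infinitely many copies stuck.
-/

open Ordinal

section General

variable {V : Type u} {G : SimpleGraph V}

theorem DominatesOn.mono_s6 {S S' : Set V} {y x : V} (h : DominatesOn G S' y x) (hS : S ⊆ S') :
    DominatesOn G S y x :=
  ⟨h.1, fun z hz => h.2 z (hS hz)⟩

theorem DominatesOn.eq_or_adj_of_adj {S : Set V} {y x z : V} (h : DominatesOn G S y x) (hz : z ∈ S)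
    (hxz : G.Adj x z) : y = z ∨ G.Adj z y :=
  (h.2 z hz (.inr hxz)).imp Eq.symm G.adj_symm

theorem DominatesOn.adj_s6 {S : Set V} {y x : V} (h : DominatesOn G S y x) (hx : x ∈ S) :
    G.Adj y x :=
  (h.2 x hx (.inl rfl)).resolve_left h.1.symm

theorem constructible_of_constructionTimes_nonempty (h : (constructionTimes G).Nonempty) :
    Constructible G :=
  let ⟨_, r, hr, hspec, _⟩ := h
  ⟨r, hr, hspec⟩

theorem constructionOrderSpec_preimage_lt {α : Type*} [Preorder α] {f : V → α}
    (hdom : ∀ x, (∃ y, f y < f x) → ∃ y, f y < f x ∧ DominatesOn G {z | f z ≤ f x} y x) :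
    ConstructionOrderSpec G (f ⁻¹'o (· < ·)) := by
  intro x hx
  obtain ⟨y, hyx, hy⟩ := hdom x hx
  exact ⟨y, hyx, hy.mono_s6 fun z hz => hz.elim le_of_lt fun h => (congrArg f h).le⟩

theorem exists_mem_constructionTimes_le_typeLT {α : Type u} [LinearOrder α] [WellFoundedLT α]
    {f : V → α} (hf : f.Injective)
    (hdom : ∀ x, (∃ y, f y < f x) → ∃ y, f y < f x ∧ DominatesOn G {z | f z ≤ f x} y x) :
    ∃ o ∈ constructionTimes G, o ≤ typeLT α := by
  let e : f ⁻¹'o (· < ·) ↪r ((· < ·) : α → α → Prop) := RelEmbedding.preimage ⟨f, hf⟩ (· < ·)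
  have : IsWellOrder V (f ⁻¹'o (· < ·)) := e.isWellOrder
  exact ⟨_, ⟨_, this, constructionOrderSpec_preimage_lt hdom, rfl⟩, e.ordinal_type_le⟩

theorem typeLT_withTop (α : Type u) [LinearOrder α] [WellFoundedLT α] :
    typeLT (WithTop α) = typeLT α + 1 := by
  let e : ((· < ·) : WithTop α → WithTop α → Prop) ≃r
      Sum.Lex ((· < ·) : α → α → Prop) ((· < ·) : PUnit.{u + 1} → PUnit → Prop) :=
    WithTop.orderIsoSumLexPUnit.toRelIsoLT.trans ⟨ofLex, Sum.Lex.lt_def.symm⟩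
  rw [e.ordinalType_congr, type_sum_lex, type_eq_one_of_unique (α := PUnit)]

theorem finite_setOf_rel_of_type_le_omega0 {r : V → V → Prop} [IsWellOrder V r]
    (hr : type r ≤ ω) (b : V) : {a | r a b}.Finite := by
  have hb : typein r b < ω := (typein_lt_type r b).trans_le hr
  rw [← card_lt_aleph0, card_typein] at hb
  exact Cardinal.lt_aleph0_iff_set_finite.mp hb

theorem ConstructionOrderSpec.exists_not_rel {r : V → V → Prop} [IsWellOrder V r]
    (hspec : ConstructionOrderSpec G r) {F C : Set V} (hF : F.Finite)
    (hundom : ∀ v ∈ F, ∀ u, ¬ DominatesOn G (F ∪ C) u v) {p : V} (hp : p ∈ F)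
    (hroot : ∃ y, r y p) : ∃ c ∈ C, ¬ r c p := by
  classical
  let := linearOrderOfSTO r
  by_contra! hC
  obtain ⟨m, hm, hmax⟩ := Set.exists_max_image F id hF ⟨p, hp⟩
  have hpm : p ≤ m := hmax p hp
  obtain ⟨y, hy⟩ := hroot
  obtain ⟨u, -, hu⟩ := hspec m ⟨y, lt_of_lt_of_le (show y < p from hy) hpm⟩
  have hearlier : F ∪ C ⊆ {z | r z m ∨ z = m} :=
    Set.union_subset (fun z hz => lt_or_eq_of_le (hmax z hz))
      fun c hc => .inl (lt_of_lt_of_le (show c < p from hC c hc) hpm)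
  exact hundom m hm u (hu.mono_s6 hearlier)

theorem omega0_add_one_mem_lowerBounds_constructionTimes {ι : Type*} [Infinite ι] {C : Set V}
    (hC : C.Finite) {F : ι → Set V} (hF : ∀ i, (F i).Finite) {p : ι → V} (hp : p.Injective)
    (hpF : ∀ i, p i ∈ F i) (hundom : ∀ i, ∀ v ∈ F i, ∀ u, ¬ DominatesOn G (F i ∪ C) u v) :
    ω + 1 ∈ lowerBounds (constructionTimes G) := by
  rintro _ ⟨r, _, hspec, rfl⟩
  by_contra! hlt
  have hsegment := finite_setOf_rel_of_type_le_omega0 (Order.lt_add_one_iff.mp hlt)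
  obtain ⟨i₀⟩ : Nonempty ι := inferInstance
  have hearly : (⋃ c ∈ insert (p i₀) C, insert c {v | r v c}).Finite :=
    (hC.insert (p i₀)).biUnion fun c _ => (hsegment c).insert c
  obtain ⟨i, hi⟩ := (hearly.preimage hp.injOn).exists_notMem
  have hafter : ∀ c ∈ insert (p i₀) C, r c (p i) := by
    intro c hc
    have hci : p i ∉ insert c {v | r v c} := fun h => hi (Set.mem_biUnion hc h)
    obtain hlt | heq | hgt := trichotomous_of r c (p i)
    · exact hlt
    · exact absurd (.inl heq.symm) hci
    · exact absurd (.inr hgt) hci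
  obtain ⟨c, hc, hnot⟩ :=
    hspec.exists_not_rel (hF i) (hundom i) (hpF i) ⟨p i₀, hafter _ (Set.mem_insert _ _)⟩
  exact hnot (hafter c (Set.mem_insert_of_mem _ hc))

end General

namespace OmegaVert

section Adjacency

variable {i : ℕ} {v : OmegaVert}

theorem adj_A_iff : OmegaGraph.Adj A v ↔ v = B ∨ ∃ j, v = X j ∨ v = Y j := by
  cases v <;> simp [OmegaGraph, OmegaRel]

theorem adj_B_iff : OmegaGraph.Adj B v ↔ v = A ∨ ∃ j, v = X j := by
  cases v <;> simp [OmegaGraph, OmegaRel]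

theorem adj_X_iff :
    OmegaGraph.Adj (X i) v ↔ v = A ∨ v = B ∨ v = Y i ∨ v = T i ∨ v = T' i := by
  cases v <;> simp [OmegaGraph, OmegaRel, eq_comm]

theorem adj_Y_iff :
    OmegaGraph.Adj (Y i) v ↔ v = A ∨ v = X i ∨ v = Z i ∨ v = Z' i ∨ v = T i ∨ v = T' i := by
  cases v <;> simp [OmegaGraph, OmegaRel, eq_comm]

theorem adj_Z_iff : OmegaGraph.Adj (Z i) v ↔ v = Y i ∨ v = Z' i ∨ v = T i ∨ v = W i := by
  cases v <;> simp [OmegaGraph, OmegaRel, eq_comm]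

theorem adj_Z'_iff : OmegaGraph.Adj (Z' i) v ↔ v = Y i ∨ v = Z i ∨ v = T' i ∨ v = W i := by
  cases v <;> simp [OmegaGraph, OmegaRel, eq_comm]

theorem adj_T_iff : OmegaGraph.Adj (T i) v ↔ v = X i ∨ v = Y i ∨ v = Z i ∨ v = W i := by
  cases v <;> simp [OmegaGraph, OmegaRel, eq_comm]

theorem adj_T'_iff : OmegaGraph.Adj (T' i) v ↔ v = X i ∨ v = Y i ∨ v = Z' i ∨ v = W i := by
  cases v <;> simp [OmegaGraph, OmegaRel, eq_comm]

theorem adj_W_iff : OmegaGraph.Adj (W i) v ↔ v = Z i ∨ v = Z' i ∨ v = T i ∨ v = T' i := by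
  cases v <;> simp [OmegaGraph, OmegaRel, eq_comm]

end Adjacency

section UpperBound

/-- The position of a vertex in a construction order of type `ω + 1`: first `A`, then the copies of
`K` one after another, each in the order `y, z, z', t, w, t', x`, and `B` last of all. -/
def position : OmegaVert → WithTop ℕ
  | A => .some 0
  | Y i => .some (7 * i + 1)
  | Z i => .some (7 * i + 2)
  | Z' i => .some (7 * i + 3)
  | T i => .some (7 * i + 4)
  | W i => .some (7 * i + 5)
  | T' i => .some (7 * i + 6)
  | X i => .some (7 * i + 7)
  | B => ⊤

/-- An earlier vertex that dominates the given one at the moment it is added in the order given by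
`position`; the value at the first vertex `A` is junk. -/
def dominator : OmegaVert → OmegaVert
  | A => A
  | Y _ => A
  | Z i => Y i
  | Z' i => Y i
  | T i => Y i
  | W i => Z i
  | T' i => Z' i
  | X i => Y i
  | B => A

theorem position_injective : position.Injective := by
  intro v w h
  cases v <;> cases w <;> simp [position] at h ⊢ <;> norm_cast at h <;> omega

theorem position_dominator_lt {x : OmegaVert} (hx : x ≠ A) :
    position (dominator x) < position x := by
  cases x with
  | A => exact absurd rfl hx
  | B => exact WithTop.coe_lt_top 0
  | _ => exact WithTop.coe_lt_coe.mpr (by omega)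

theorem dominator_adj {x : OmegaVert} (hx : x ≠ A) : OmegaGraph.Adj (dominator x) x := by
  cases x <;> simp [dominator, adj_A_iff, adj_Y_iff, adj_Z_iff, adj_Z'_iff] at hx ⊢

theorem position_lt_of_adj_of_not_dominator_adj {x z : OmegaVert} (hxz : OmegaGraph.Adj x z)
    (hne : z ≠ dominator x) (hdz : ¬ OmegaGraph.Adj (dominator x) z) : position x < position z := by
  cases x with
  | A => exact absurd hxz hdz
  | B => grind [dominator, adj_A_iff, adj_B_iff]
  | X i =>
    obtain rfl : z = B := by grind [dominator, adj_X_iff, adj_Y_iff]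
    exact WithTop.coe_lt_top _
  | Y i =>
    obtain rfl | rfl | rfl | rfl : z = Z i ∨ z = Z' i ∨ z = T i ∨ z = T' i := by
      grind [dominator, adj_A_iff, adj_Y_iff]
    all_goals exact WithTop.coe_lt_coe.mpr (by omega)
  | Z i =>
    obtain rfl : z = W i := by grind [dominator, adj_Y_iff, adj_Z_iff]
    exact WithTop.coe_lt_coe.mpr (by omega)
  | Z' i =>
    obtain rfl : z = W i := by grind [dominator, adj_Y_iff, adj_Z'_iff]
    exact WithTop.coe_lt_coe.mpr (by omega)
  | T i =>
    obtain rfl : z = W i := by grind [dominator, adj_Y_iff, adj_T_iff]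
    exact WithTop.coe_lt_coe.mpr (by omega)
  | T' i =>
    obtain rfl : z = X i := by grind [dominator, adj_Z'_iff, adj_T'_iff]
    exact WithTop.coe_lt_coe.mpr (by omega)
  | W i =>
    obtain rfl : z = T' i := by grind [dominator, adj_Z_iff, adj_W_iff]
    exact WithTop.coe_lt_coe.mpr (by omega)

theorem dominatesOn_dominator {x : OmegaVert} (hx : x ≠ A) :
    DominatesOn OmegaGraph {z | position z ≤ position x} (dominator x) x := by
  refine ⟨(dominator_adj hx).ne, ?_⟩
  rintro z hz (rfl | hxz)
  · exact .inr (dominator_adj hx)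
  · by_contra! ⟨hne, hdz⟩
    exact (position_lt_of_adj_of_not_dominator_adj hxz hne hdz).not_ge hz

theorem exists_dominatesOn_of_position_lt (x : OmegaVert) (hx : ∃ y, position y < position x) :
    ∃ y, position y < position x ∧ DominatesOn OmegaGraph {z | position z ≤ position x} y x := by
  have hxA : x ≠ A := by
    rintro rfl
    obtain ⟨y, hy⟩ := hx
    exact not_lt_bot hy
  exact ⟨dominator x, position_dominator_lt hxA, dominatesOn_dominator hxA⟩

theorem exists_mem_constructionTimes_le_omega0_add_one :
    ∃ o ∈ constructionTimes OmegaGraph, o ≤ ω + 1 := by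
  rw [← type_nat_lt, ← typeLT_withTop]
  exact exists_mem_constructionTimes_le_typeLT position_injective exists_dominatesOn_of_position_lt

end UpperBound

section LowerBound

/-- The vertex set of the `i`-th copy of `K`. -/
def copy (i : ℕ) : Set OmegaVert := {X i, Y i, Z i, Z' i, T i, T' i, W i}

theorem finite_copy (i : ℕ) : (copy i).Finite :=
  Set.toFinite {X i, Y i, Z i, Z' i, T i, T' i, W i}

variable {i : ℕ} {S : Set OmegaVert} {u : OmegaVert}

theorem not_dominatesOn_X (hB : B ∈ S) (hT : T i ∈ S) : ¬ DominatesOn OmegaGraph S u (X i) := by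
  intro h
  have huB := h.eq_or_adj_of_adj hB (by simp [adj_X_iff])
  have huT := h.eq_or_adj_of_adj hT (by simp [adj_X_iff])
  simp only [adj_B_iff, adj_T_iff] at huB huT
  grind [h.1]

theorem not_dominatesOn_Y (hA : A ∈ S) (hZ : Z i ∈ S) : ¬ DominatesOn OmegaGraph S u (Y i) := by
  intro h
  have huA := h.eq_or_adj_of_adj hA (by simp [adj_Y_iff])
  have huZ := h.eq_or_adj_of_adj hZ (by simp [adj_Y_iff])
  simp only [adj_A_iff, adj_Z_iff] at huA huZ
  grind [h.1]

theorem not_dominatesOn_Z (hY : Y i ∈ S) (hZ' : Z' i ∈ S) (hT : T i ∈ S) (hW : W i ∈ S) :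
    ¬ DominatesOn OmegaGraph S u (Z i) := by
  intro h
  have huY := h.eq_or_adj_of_adj hY (by simp [adj_Z_iff])
  have huZ' := h.eq_or_adj_of_adj hZ' (by simp [adj_Z_iff])
  have huT := h.eq_or_adj_of_adj hT (by simp [adj_Z_iff])
  have huW := h.eq_or_adj_of_adj hW (by simp [adj_Z_iff])
  simp only [adj_Y_iff, adj_Z'_iff, adj_T_iff, adj_W_iff] at huY huZ' huT huW
  grind [h.1]

theorem not_dominatesOn_Z' (hY : Y i ∈ S) (hZ : Z i ∈ S) (hT' : T' i ∈ S) (hW : W i ∈ S) :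
    ¬ DominatesOn OmegaGraph S u (Z' i) := by
  intro h
  have huY := h.eq_or_adj_of_adj hY (by simp [adj_Z'_iff])
  have huZ := h.eq_or_adj_of_adj hZ (by simp [adj_Z'_iff])
  have huT' := h.eq_or_adj_of_adj hT' (by simp [adj_Z'_iff])
  have huW := h.eq_or_adj_of_adj hW (by simp [adj_Z'_iff])
  simp only [adj_Y_iff, adj_Z_iff, adj_T'_iff, adj_W_iff] at huY huZ huT' huW
  grind [h.1]

theorem not_dominatesOn_T (hX : X i ∈ S) (hZ : Z i ∈ S) (hW : W i ∈ S) :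
    ¬ DominatesOn OmegaGraph S u (T i) := by
  intro h
  have huX := h.eq_or_adj_of_adj hX (by simp [adj_T_iff])
  have huZ := h.eq_or_adj_of_adj hZ (by simp [adj_T_iff])
  have huW := h.eq_or_adj_of_adj hW (by simp [adj_T_iff])
  simp only [adj_X_iff, adj_Z_iff, adj_W_iff] at huX huZ huW
  grind [h.1]

theorem not_dominatesOn_T' (hX : X i ∈ S) (hZ' : Z' i ∈ S) (hW : W i ∈ S) :
    ¬ DominatesOn OmegaGraph S u (T' i) := by
  intro h
  have huX := h.eq_or_adj_of_adj hX (by simp [adj_T'_iff])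
  have huZ' := h.eq_or_adj_of_adj hZ' (by simp [adj_T'_iff])
  have huW := h.eq_or_adj_of_adj hW (by simp [adj_T'_iff])
  simp only [adj_X_iff, adj_Z'_iff, adj_W_iff] at huX huZ' huW
  grind [h.1]

theorem not_dominatesOn_W (hW : W i ∈ S) (hT : T i ∈ S) (hT' : T' i ∈ S) :
    ¬ DominatesOn OmegaGraph S u (W i) := by
  intro h
  have huW := adj_W_iff.mp (h.adj_s6 hW).symm
  have huT := h.eq_or_adj_of_adj hT (by simp [adj_W_iff])
  have huT' := h.eq_or_adj_of_adj hT' (by simp [adj_W_iff])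
  simp only [adj_T_iff, adj_T'_iff] at huT huT'
  grind

theorem not_dominatesOn_copy_union_of_mem {v : OmegaVert} (hv : v ∈ copy i) :
    ¬ DominatesOn OmegaGraph (copy i ∪ {A, B}) u v := by
  rcases hv with rfl | rfl | rfl | rfl | rfl | rfl | rfl
  · exact not_dominatesOn_X (by simp) (by simp [copy])
  · exact not_dominatesOn_Y (by simp) (by simp [copy])
  · apply not_dominatesOn_Z <;> simp [copy]
  · apply not_dominatesOn_Z' <;> simp [copy]
  · apply not_dominatesOn_T <;> simp [copy]
  · apply not_dominatesOn_T' <;> simp [copy]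
  · apply not_dominatesOn_W <;> simp [copy]

theorem omega0_add_one_le_of_mem_constructionTimes {o : Ordinal}
    (ho : o ∈ constructionTimes OmegaGraph) : ω + 1 ≤ o :=
  omega0_add_one_mem_lowerBounds_constructionTimes (Set.toFinite {A, B}) finite_copy
    (fun _ _ => X.inj) (fun i => Set.mem_insert (X i) _)
    (fun _ _ hv _ => not_dominatesOn_copy_union_of_mem hv) ho

end LowerBound

end OmegaVert

theorem omegaGraph_construction_time :
    Constructible OmegaGraph ∧
    IsLeast (constructionTimes OmegaGraph) (Ordinal.omega0 + 1) := by
  obtain ⟨o, ho, ho_le⟩ := OmegaVert.exists_mem_constructionTimes_le_omega0_add_one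
  obtain rfl : o = ω + 1 :=
    ho_le.antisymm (OmegaVert.omega0_add_one_le_of_mem_constructionTimes ho)
  exact ⟨constructible_of_constructionTimes_nonempty ⟨_, ho⟩, ho,
    fun _ => OmegaVert.omega0_add_one_le_of_mem_constructionTimes⟩
end
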